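/- Let κ > 0 and 0 < R' < R. Then lim_{n → ∞} [∫_{R'}^{R} t²·W_n(R', t) dt] / [ (−2i·R²/((2n+1)·(n+3)·κ))·(R/R')^{n+1} ] = 1, i.e. ∫_{R'}^{R} t²·W_n(R', t) dt is asymptotically equal to −(2i·R²/((2n+1)(n+3)κ))·(R/R')^{n+1} as n → ∞. -/

import Mathlib

/-!
Let `ρ = R'`. As a function of `t`, `V(t) = κ² ρ t W_n(ρ, t)` is a combination of the two Riccati–Hankel functions
`z h_n(z)` at `z = κ t`, so it solves `V'' = (n (n + 1) / t² - κ²) V` (`hasDerivAt_rayV1`, a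
recurrence for the Rayleigh coefficients), with `V ρ = 0` and, by the Wronskian identity
`ray_wronskian`, `V' ρ = -2Iκ`.

For large `n` the term `κ² V` is a small perturbation. Writing `V = t^(n+1) y`, the equation becomes
`(t^(2n+2) y')' = -κ² t^(2n+2) y`. Integrating twice shows that `y` differs from the solution `y₀`
for `κ = 0` by at most `δ · max ‖y‖`, where `δ = κ² R² / (2 (2n + 3)) → 0`;
for `δ ≤ 1/2` this also bounds `max ‖y‖` (`perturbation`). The leading part of `t V(t)` is thus
`-2Iκ t^(n+2) / ((2n + 1) ρ^n)`, and integrating it over `[ρ, R]` gives the claim, with relative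
error at most `2 δ + (n + 3) (ρ / R)^(n+2)` (`ratio_bound`).
-/

/-- Spherical Hankel function of the first kind, via the Rayleigh formula. -/
noncomputable def sphH1 (n : ℕ) (z : ℂ) : ℂ :=
  (-Complex.I) ^ (n + 1) * (Complex.exp (Complex.I * z) / z) *
    ∑ m ∈ Finset.range (n + 1),
      Complex.I ^ m * ((Nat.factorial (n + m) : ℂ) /
        ((Nat.factorial m : ℂ) * (Nat.factorial (n - m) : ℂ) * (2 * z) ^ m))

/-- Spherical Hankel function of the second kind, via the Rayleigh formula. -/
noncomputable def sphH2 (n : ℕ) (z : ℂ) : ℂ :=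
  Complex.I ^ (n + 1) * (Complex.exp (-Complex.I * z) / z) *
    ∑ m ∈ Finset.range (n + 1),
      (-Complex.I) ^ m * ((Nat.factorial (n + m) : ℂ) /
        ((Nat.factorial m : ℂ) * (Nat.factorial (n - m) : ℂ) * (2 * z) ^ m))

/-- `z_n^{(1)}(t) = t·h_n^{(1)′}(t)/h_n^{(1)}(t)`. -/
noncomputable def zH1 (n : ℕ) (t : ℝ) : ℂ :=
  (t : ℂ) * deriv (sphH1 n) (t : ℂ) / sphH1 n (t : ℂ)

/-- `z_n^{(2)}(t) = t·h_n^{(2)′}(t)/h_n^{(2)}(t)`. -/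
noncomputable def zH2 (n : ℕ) (t : ℝ) : ℂ :=
  (t : ℂ) * deriv (sphH2 n) (t : ℂ) / sphH2 n (t : ℂ)

/-- `S_n(ρ) = h_n^{(2)}(κρ)/h_n^{(2)}(κR')`. -/
noncomputable def Sfun (κ R' : ℝ) (n : ℕ) (ρ : ℝ) : ℂ :=
  sphH2 n ((κ * ρ : ℝ) : ℂ) / sphH2 n ((κ * R' : ℝ) : ℂ)

/-- `W_n(ρ, t) = h_n^{(1)}(κρ)·h_n^{(2)}(κt) − h_n^{(2)}(κρ)·h_n^{(1)}(κt)`. -/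
noncomputable def Wfun (κ : ℝ) (n : ℕ) (ρ t : ℝ) : ℂ :=
  sphH1 n ((κ * ρ : ℝ) : ℂ) * sphH2 n ((κ * t : ℝ) : ℂ)
    - sphH2 n ((κ * ρ : ℝ) : ℂ) * sphH1 n ((κ * t : ℝ) : ℂ)

/-! ### Rayleigh sums and the Riccati–Bessel equation -/

/-- The coefficient `(n+m)! / (m! (n-m)! 2^m)` of the Rayleigh sums. -/
noncomputable def rayCoeff (n m : ℕ) : ℂ :=
  (Nat.factorial (n + m) : ℂ) / ((Nat.factorial m : ℂ) * (Nat.factorial (n - m) : ℂ) * 2 ^ m)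

/-- The Rayleigh sum as a polynomial in `w = 1/z`; `ε = I` and `ε = -I` give the two kinds. -/
noncomputable def rayQ (n : ℕ) (ε w : ℂ) : ℂ :=
  ∑ m ∈ Finset.range (n + 1), rayCoeff n m * ε ^ m * w ^ m

/-- The first `z`-derivative of `rayQ n ε z⁻¹`, as a polynomial in `w = 1/z`. -/
noncomputable def rayQ1 (n : ℕ) (ε w : ℂ) : ℂ :=
  ∑ m ∈ Finset.range (n + 1), rayCoeff n m * ε ^ m * (-(m : ℂ) * w ^ (m + 1))

/-- The second `z`-derivative of `rayQ n ε z⁻¹`, as a polynomial in `w = 1/z`. -/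
noncomputable def rayQ2 (n : ℕ) (ε w : ℂ) : ℂ :=
  ∑ m ∈ Finset.range (n + 1), rayCoeff n m * ε ^ m * ((m : ℂ) * (m + 1) * w ^ (m + 2))

/-- The Riccati–Hankel function `z h_n(z)` without its unimodular prefactor `(∓I)^(n+1)`. -/
noncomputable def rayE (n : ℕ) (ε z : ℂ) : ℂ := Complex.exp (ε * z) * rayQ n ε z⁻¹

/-- The derivative of `rayE n ε`. -/
noncomputable def rayE1 (n : ℕ) (ε z : ℂ) : ℂ :=
  Complex.exp (ε * z) * (ε * rayQ n ε z⁻¹ + rayQ1 n ε z⁻¹)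

lemma rayCoeff_succ (n m : ℕ) (h : m < n) :
    2 * ((m : ℂ) + 1) * rayCoeff n (m + 1) =
      rayCoeff n m * ((n : ℂ) * (n + 1) - m * (m + 1)) := by
  obtain ⟨k, rfl⟩ : ∃ k, n = m + 1 + k := ⟨n - (m + 1), by omega⟩
  unfold rayCoeff
  have e1 : m + 1 + k - (m + 1) = k := by omega
  have e2 : m + 1 + k - m = k + 1 := by omega
  have e3 : m + 1 + k + (m + 1) = (m + 1 + k + m) + 1 := by omega
  rw [e1, e2, e3, Nat.factorial_succ (m + 1 + k + m), Nat.factorial_succ m, Nat.factorial_succ k]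
  have h1 : (Nat.factorial m : ℂ) ≠ 0 := by exact_mod_cast Nat.factorial_ne_zero m
  have h2 : (Nat.factorial k : ℂ) ≠ 0 := by exact_mod_cast Nat.factorial_ne_zero k
  have h3 : (m : ℂ) + 1 ≠ 0 := by exact_mod_cast Nat.succ_ne_zero m
  have h4 : (k : ℂ) + 1 ≠ 0 := by exact_mod_cast Nat.succ_ne_zero k
  push_cast
  field_simp
  ring

/-- The coefficient recurrence makes `Q'' + 2 ε Q' = n (n + 1) z⁻² Q` for `ε² = -1`. -/
lemma rayQ_ode (n : ℕ) (ε w : ℂ) (hε : ε ^ 2 = -1) :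
    rayQ2 n ε w + 2 * ε * rayQ1 n ε w = (n : ℂ) * (n + 1) * w ^ 2 * rayQ n ε w := by
  have h1 : 2 * ε * rayQ1 n ε w = ∑ m ∈ Finset.range (n + 1),
      rayCoeff n m * ε ^ m * (((n : ℂ) * (n + 1) - m * (m + 1)) * w ^ (m + 2)) := by
    unfold rayQ1
    rw [Finset.sum_range_succ', Finset.sum_range_succ]
    simp only [Nat.cast_zero, neg_zero, zero_mul, mul_zero, add_zero, sub_self]
    rw [Finset.mul_sum]
    refine Finset.sum_congr rfl fun m hm => ?_
    have := rayCoeff_succ n m (Finset.mem_range.1 hm)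
    push_cast
    linear_combination (ε ^ m * w ^ (m + 2)) * this
      - 2 * ((m : ℂ) + 1) * rayCoeff n (m + 1) * ε ^ m * w ^ (m + 2) * hε
  rw [h1]
  unfold rayQ2 rayQ
  rw [← Finset.sum_add_distrib, Finset.mul_sum]
  refine Finset.sum_congr rfl fun m _ => ?_
  ring

lemma hasDerivAt_inv_pow' (m : ℕ) (z : ℂ) (hz : z ≠ 0) :
    HasDerivAt (fun z : ℂ => z⁻¹ ^ m) (-(m : ℂ) * z⁻¹ ^ (m + 1)) z := by
  have h := (hasDerivAt_inv hz).pow m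
  refine h.congr_deriv ?_
  cases m with
  | zero => simp
  | succ k =>
    simp only [Nat.add_sub_cancel]
    ring

lemma hasDerivAt_rayQ (n : ℕ) (ε z : ℂ) (hz : z ≠ 0) :
    HasDerivAt (fun z : ℂ => rayQ n ε z⁻¹) (rayQ1 n ε z⁻¹) z := by
  unfold rayQ rayQ1
  exact HasDerivAt.fun_sum fun m _ => (hasDerivAt_inv_pow' m z hz).const_mul _

lemma hasDerivAt_rayQ1 (n : ℕ) (ε z : ℂ) (hz : z ≠ 0) :
    HasDerivAt (fun z : ℂ => rayQ1 n ε z⁻¹) (rayQ2 n ε z⁻¹) z := by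
  unfold rayQ1 rayQ2
  refine HasDerivAt.fun_sum fun m _ => ?_
  refine (((hasDerivAt_inv_pow' (m + 1) z hz).const_mul (-(m : ℂ))).const_mul _).congr_deriv ?_
  push_cast
  ring

lemma hasDerivAt_cexp_mul (ε z : ℂ) :
    HasDerivAt (fun z : ℂ => Complex.exp (ε * z)) (Complex.exp (ε * z) * ε) z := by
  simpa using ((hasDerivAt_id z).const_mul ε).cexp

lemma hasDerivAt_rayE (n : ℕ) (ε z : ℂ) (hz : z ≠ 0) :
    HasDerivAt (rayE n ε) (rayE1 n ε z) z := by
  refine ((hasDerivAt_cexp_mul ε z).mul (hasDerivAt_rayQ n ε z hz)).congr_deriv ?_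
  unfold rayE1
  ring

lemma hasDerivAt_rayE1 (n : ℕ) (ε z : ℂ) (hε : ε ^ 2 = -1) (hz : z ≠ 0) :
    HasDerivAt (rayE1 n ε) (((n : ℂ) * (n + 1) / z ^ 2 - 1) * rayE n ε z) z := by
  refine ((hasDerivAt_cexp_mul ε z).mul
    (((hasDerivAt_rayQ n ε z hz).const_mul ε).add (hasDerivAt_rayQ1 n ε z hz))).congr_deriv ?_
  have h := rayQ_ode n ε z⁻¹ hε
  unfold rayE
  simp only [Pi.add_apply]
  rw [div_eq_mul_inv, ← inv_pow]
  linear_combination Complex.exp (ε * z) * h + Complex.exp (ε * z) * rayQ n ε z⁻¹ * hε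

lemma rayQ_tendsto (n : ℕ) (ε : ℂ) :
    Filter.Tendsto (fun x : ℝ => rayQ n ε (x : ℂ)⁻¹) Filter.atTop (nhds 1) := by
  have h0 : Filter.Tendsto (fun x : ℝ => ((x : ℂ))⁻¹) Filter.atTop (nhds 0) := by
    have := (Complex.continuous_ofReal.tendsto 0).comp (tendsto_inv_atTop_zero (𝕜 := ℝ))
    simpa [Function.comp_def] using this
  have hc : Continuous (rayQ n ε) := by unfold rayQ; fun_prop
  have hv : rayQ n ε 0 = 1 := by
    unfold rayQ
    rw [Finset.sum_range_succ']
    simp [rayCoeff, Nat.factorial_ne_zero]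
  have := (hc.tendsto 0).comp h0
  rw [hv] at this
  exact this

lemma rayQ1_tendsto (n : ℕ) (ε : ℂ) :
    Filter.Tendsto (fun x : ℝ => rayQ1 n ε (x : ℂ)⁻¹) Filter.atTop (nhds 0) := by
  have h0 : Filter.Tendsto (fun x : ℝ => ((x : ℂ))⁻¹) Filter.atTop (nhds 0) := by
    have := (Complex.continuous_ofReal.tendsto 0).comp (tendsto_inv_atTop_zero (𝕜 := ℝ))
    simpa [Function.comp_def] using this
  have hc : Continuous (rayQ1 n ε) := by unfold rayQ1; fun_prop
  have hv : rayQ1 n ε 0 = 0 := by simp [rayQ1]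
  have := (hc.tendsto 0).comp h0
  rw [hv] at this
  exact this

/-! ### The Wronskian -/

/-- The Wronskian of the two Riccati–Hankel functions: it is constant on `(0, ∞)` because both
solve the same equation without first-order term, and its limit at infinity is `-2I`. -/
lemma ray_wronskian (n : ℕ) (x : ℝ) (hx : 0 < x) :
    rayE n Complex.I x * rayE1 n (-Complex.I) x - rayE n (-Complex.I) x * rayE1 n Complex.I x
      = -2 * Complex.I := by
  set w : ℝ → ℂ := fun x => rayE n Complex.I x * rayE1 n (-Complex.I) x
    - rayE n (-Complex.I) x * rayE1 n Complex.I x with hw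
  have hI : Complex.I ^ 2 = -1 := Complex.I_sq
  have hI' : (-Complex.I) ^ 2 = -1 := by rw [neg_sq, Complex.I_sq]
  have hd : ∀ y : ℝ, 0 < y → HasDerivAt w 0 y := by
    intro y hy
    have hy' : (y : ℂ) ≠ 0 := by exact_mod_cast hy.ne'
    have := ((((hasDerivAt_rayE n Complex.I y hy').mul
      (hasDerivAt_rayE1 n (-Complex.I) y hI' hy')).sub
      ((hasDerivAt_rayE n (-Complex.I) y hy').mul
      (hasDerivAt_rayE1 n Complex.I y hI hy'))).comp_ofReal)
    refine this.congr_deriv ?_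
    ring
  have hconst : ∀ y : ℝ, 0 < y → w y = w x := by
    intro y hy
    refine (convex_Ioi (0 : ℝ)).is_const_of_fderivWithin_eq_zero (𝕜 := ℝ)
      (fun z hz => (hd z hz).differentiableAt.differentiableWithinAt) ?_ hy hx
    intro z hz
    rw [((hd z hz).hasFDerivAt.hasFDerivWithinAt).fderivWithin
      (isOpen_Ioi.uniqueDiffWithinAt hz)]
    ext
    simp
  have hlim : Filter.Tendsto w Filter.atTop (nhds (-2 * Complex.I)) := by
    have e : ∀ y : ℝ, w y =
        rayQ n Complex.I (y : ℂ)⁻¹ * (-Complex.I * rayQ n (-Complex.I) (y : ℂ)⁻¹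
          + rayQ1 n (-Complex.I) (y : ℂ)⁻¹)
        - rayQ n (-Complex.I) (y : ℂ)⁻¹ * (Complex.I * rayQ n Complex.I (y : ℂ)⁻¹
          + rayQ1 n Complex.I (y : ℂ)⁻¹) := by
      intro y
      have hexp : Complex.exp (Complex.I * y) * Complex.exp (-Complex.I * y) = 1 := by
        rw [← Complex.exp_add]
        simp
      simp only [hw, rayE, rayE1]
      linear_combination (rayQ n Complex.I (y : ℂ)⁻¹ * (-Complex.I * rayQ n (-Complex.I) (y : ℂ)⁻¹
          + rayQ1 n (-Complex.I) (y : ℂ)⁻¹)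
        - rayQ n (-Complex.I) (y : ℂ)⁻¹ * (Complex.I * rayQ n Complex.I (y : ℂ)⁻¹
          + rayQ1 n Complex.I (y : ℂ)⁻¹)) * hexp
    rw [funext e]
    have a := rayQ_tendsto n Complex.I
    have b := rayQ_tendsto n (-Complex.I)
    have a1 := rayQ1_tendsto n Complex.I
    have b1 := rayQ1_tendsto n (-Complex.I)
    have := (a.mul ((b.const_mul (-Complex.I)).add b1)).sub (b.mul ((a.const_mul Complex.I).add a1))
    convert this using 2
    ring
  have hlim' : Filter.Tendsto w Filter.atTop (nhds (w x)) := by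
    refine tendsto_const_nhds.congr' ?_
    filter_upwards [Filter.eventually_gt_atTop 0] with y hy
    exact (hconst y hy).symm
  exact tendsto_nhds_unique hlim' hlim

/-! ### The kernel as an initial value problem -/

lemma sphH1_eq (n : ℕ) (z : ℂ) :
    sphH1 n z = (-Complex.I) ^ (n + 1) * rayE n Complex.I z / z := by
  unfold sphH1 rayE rayQ
  have : ∀ m ∈ Finset.range (n + 1), Complex.I ^ m * ((Nat.factorial (n + m) : ℂ) /
        ((Nat.factorial m : ℂ) * (Nat.factorial (n - m) : ℂ) * (2 * z) ^ m))
      = rayCoeff n m * Complex.I ^ m * z⁻¹ ^ m := by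
    intro m _
    unfold rayCoeff
    simp only [div_eq_mul_inv, mul_pow, mul_inv, inv_pow]
    ring
  rw [Finset.sum_congr rfl this]
  ring

lemma sphH2_eq (n : ℕ) (z : ℂ) :
    sphH2 n z = Complex.I ^ (n + 1) * rayE n (-Complex.I) z / z := by
  unfold sphH2 rayE rayQ
  have : ∀ m ∈ Finset.range (n + 1), (-Complex.I) ^ m * ((Nat.factorial (n + m) : ℂ) /
        ((Nat.factorial m : ℂ) * (Nat.factorial (n - m) : ℂ) * (2 * z) ^ m))
      = rayCoeff n m * (-Complex.I) ^ m * z⁻¹ ^ m := by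
    intro m _
    unfold rayCoeff
    simp only [div_eq_mul_inv, mul_pow, mul_inv, inv_pow]
    ring
  rw [Finset.sum_congr rfl this]
  ring

/-- The solution `V` of `V'' = (n (n + 1) / t² - κ²) V` with `V ρ = 0` and `V' ρ = -2Iκ`; it equals
`κ² ρ t W_n(ρ, t)`. -/
noncomputable def rayV (κ ρ : ℝ) (n : ℕ) (t : ℝ) : ℂ :=
  rayE n Complex.I ((κ * ρ : ℝ) : ℂ) * rayE n (-Complex.I) ((κ * t : ℝ) : ℂ)
    - rayE n (-Complex.I) ((κ * ρ : ℝ) : ℂ) * rayE n Complex.I ((κ * t : ℝ) : ℂ)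

/-- The derivative of `rayV κ ρ n`. -/
noncomputable def rayV1 (κ ρ : ℝ) (n : ℕ) (t : ℝ) : ℂ :=
  κ * (rayE n Complex.I ((κ * ρ : ℝ) : ℂ) * rayE1 n (-Complex.I) ((κ * t : ℝ) : ℂ)
    - rayE n (-Complex.I) ((κ * ρ : ℝ) : ℂ) * rayE1 n Complex.I ((κ * t : ℝ) : ℂ))

lemma Wfun_eq (κ ρ : ℝ) (n : ℕ) (t : ℝ) (hκ : 0 < κ) (hρ : 0 < ρ) (ht : 0 < t) :
    (t : ℂ) ^ 2 * Wfun κ n ρ t = (t : ℂ) * rayV κ ρ n t / ((κ : ℂ) ^ 2 * ρ) := by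
  have h1 : (κ : ℂ) ≠ 0 := by exact_mod_cast hκ.ne'
  have h2 : (ρ : ℂ) ≠ 0 := by exact_mod_cast hρ.ne'
  have h3 : (t : ℂ) ≠ 0 := by exact_mod_cast ht.ne'
  have hI : (-Complex.I) ^ (n + 1) * Complex.I ^ (n + 1) = 1 := by
    rw [← mul_pow]; simp
  unfold Wfun
  rw [sphH1_eq, sphH2_eq, sphH1_eq, sphH2_eq]
  have e : rayV κ ρ n t = ((-Complex.I) ^ (n + 1) * Complex.I ^ (n + 1)) * rayV κ ρ n t := by
    rw [hI, one_mul]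
  rw [e]
  unfold rayV
  generalize rayE n Complex.I ((κ * ρ : ℝ) : ℂ) = a
  generalize rayE n (-Complex.I) ((κ * ρ : ℝ) : ℂ) = b
  generalize rayE n Complex.I ((κ * t : ℝ) : ℂ) = c
  generalize rayE n (-Complex.I) ((κ * t : ℝ) : ℂ) = d
  generalize (-Complex.I) ^ (n + 1) = p
  generalize Complex.I ^ (n + 1) = q
  push_cast
  field_simp

lemma hasDerivAt_comp_scale (f : ℂ → ℂ) (f' : ℂ) (κ t : ℝ)
    (h : HasDerivAt f f' ((κ * t : ℝ) : ℂ)) :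
    HasDerivAt (fun t : ℝ => f ((κ * t : ℝ) : ℂ)) (κ * f') t := by
  have h1 : HasDerivAt (fun t : ℝ => κ * t) κ t := by
    simpa using (hasDerivAt_id t).const_mul κ
  have := HasDerivAt.scomp t h.comp_ofReal h1
  simpa [Function.comp_def] using this

lemma hasDerivAt_rayV (κ ρ : ℝ) (n : ℕ) (t : ℝ) (hκ : 0 < κ) (ht : 0 < t) :
    HasDerivAt (rayV κ ρ n) (rayV1 κ ρ n t) t := by
  have hz : ((κ * t : ℝ) : ℂ) ≠ 0 := by exact_mod_cast (mul_pos hκ ht).ne'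
  refine (((hasDerivAt_comp_scale _ _ κ t (hasDerivAt_rayE n (-Complex.I) _ hz)).const_mul
    (rayE n Complex.I ((κ * ρ : ℝ) : ℂ))).sub
    ((hasDerivAt_comp_scale _ _ κ t (hasDerivAt_rayE n Complex.I _ hz)).const_mul
    (rayE n (-Complex.I) ((κ * ρ : ℝ) : ℂ)))).congr_deriv ?_
  unfold rayV1
  ring

lemma hasDerivAt_rayV1 (κ ρ : ℝ) (n : ℕ) (t : ℝ) (hκ : 0 < κ) (ht : 0 < t) :
    HasDerivAt (rayV1 κ ρ n)
      (((n : ℂ) * (n + 1) / (t : ℂ) ^ 2 - (κ : ℂ) ^ 2) * rayV κ ρ n t) t := by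
  have hz : ((κ * t : ℝ) : ℂ) ≠ 0 := by exact_mod_cast (mul_pos hκ ht).ne'
  have hI : Complex.I ^ 2 = -1 := Complex.I_sq
  have hI' : (-Complex.I) ^ 2 = -1 := by rw [neg_sq, Complex.I_sq]
  refine ((((hasDerivAt_comp_scale _ _ κ t (hasDerivAt_rayE1 n (-Complex.I) _ hI' hz)).const_mul
    (rayE n Complex.I ((κ * ρ : ℝ) : ℂ))).sub
    ((hasDerivAt_comp_scale _ _ κ t (hasDerivAt_rayE1 n Complex.I _ hI hz)).const_mul
    (rayE n (-Complex.I) ((κ * ρ : ℝ) : ℂ)))).const_mul (κ : ℂ)).congr_deriv ?_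
  have h1 : (κ : ℂ) ≠ 0 := by exact_mod_cast hκ.ne'
  have h3 : (t : ℂ) ≠ 0 := by exact_mod_cast ht.ne'
  have e : (κ : ℂ) ^ 2 * ((n : ℂ) * (n + 1) / ((κ * t : ℝ) : ℂ) ^ 2 - 1)
      = (n : ℂ) * (n + 1) / (t : ℂ) ^ 2 - (κ : ℂ) ^ 2 := by
    push_cast
    field_simp
  rw [← e]
  unfold rayV
  ring

lemma rayV_self (κ ρ : ℝ) (n : ℕ) : rayV κ ρ n ρ = 0 := by
  unfold rayV
  ring

lemma rayV1_self (κ ρ : ℝ) (n : ℕ) (hκ : 0 < κ) (hρ : 0 < ρ) :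
    rayV1 κ ρ n ρ = -2 * Complex.I * κ := by
  unfold rayV1
  rw [ray_wronskian n _ (mul_pos hκ hρ)]
  ring

/-! ### Perturbation of the equation without `κ` -/

lemma norm_le_of_deriv_bound (f f' : ℝ → ℂ) (B B' : ℝ → ℝ) (a b : ℝ) (ha : 0 < a)
    (hf : ∀ t, 0 < t → HasDerivAt f (f' t) t) (hB : ∀ t, HasDerivAt B (B' t) t)
    (h0 : f a = 0) (hB0 : 0 ≤ B a) (hb : ∀ t ∈ Set.Icc a b, ‖f' t‖ ≤ B' t) :
    ∀ t ∈ Set.Icc a b, ‖f t‖ ≤ B t := by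
  intro t ht
  refine image_norm_le_of_norm_deriv_right_le_deriv_boundary (f := f) (f' := f') (a := a) (b := b)
    ?_ ?_ ?_ hB ?_ ht
  · intro x hx
    exact (hf x (lt_of_lt_of_le ha hx.1)).continuousAt.continuousWithinAt
  · intro x hx
    exact (hf x (lt_of_lt_of_le ha hx.1)).hasDerivWithinAt
  · simpa [h0] using hB0
  · intro x hx
    exact hb x ⟨hx.1, hx.2.le⟩

/-- Perturbation estimate: as long as `δ = κ² R² / (2 (2n + 3))` is at most `1/2`, the solution `V`
of `V'' = (n (n + 1) / t² - κ²) V`, `V ρ = 0`, `V' ρ = c`, differs from the solution for `κ = 0`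
by at most `2δ` times `‖c‖ t^(n+1) / ((2n+1) ρ^n)`, an upper bound for the latter. -/
lemma perturbation (n : ℕ) (κ ρ R : ℝ) (c : ℂ) (V V1 : ℝ → ℂ) (hρ : 0 < ρ) (hR : ρ < R)
    (hV : ∀ t, 0 < t → HasDerivAt V (V1 t) t)
    (hV1 : ∀ t : ℝ, 0 < t →
      HasDerivAt V1 (((n : ℂ) * (n + 1) / (t : ℂ) ^ 2 - (κ : ℂ) ^ 2) * V t) t)
    (h0 : V ρ = 0) (h1 : V1 ρ = c) (δ : ℝ) (hδ : δ = κ ^ 2 * R ^ 2 / (2 * (2 * n + 3)))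
    (hδ2 : δ ≤ 1 / 2) :
    ∀ t ∈ Set.Icc ρ R,
      ‖V t / (t : ℂ) ^ (n + 1) -
        c * (ρ : ℂ) ^ (n + 1) / (2 * n + 1) *
          (((ρ : ℂ) ^ (2 * n + 1))⁻¹ - ((t : ℂ) ^ (2 * n + 1))⁻¹)‖
        ≤ 2 * δ * (‖c‖ / (ρ ^ n * (2 * n + 1))) := by
  have hδ0 : 0 ≤ δ := by rw [hδ]; positivity
  set y : ℝ → ℂ := fun t => V t / (t : ℂ) ^ (n + 1) with hy
  set F : ℝ → ℂ := fun t => (t : ℂ) ^ (n + 1) * V1 t - (n + 1) * (t : ℂ) ^ n * V t with hF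
  set y0 : ℝ → ℂ := fun t => c * (ρ : ℂ) ^ (n + 1) / (2 * n + 1) *
          (((ρ : ℂ) ^ (2 * n + 1))⁻¹ - ((t : ℂ) ^ (2 * n + 1))⁻¹) with hy0
  set A : ℝ := ‖c‖ / (ρ ^ n * (2 * n + 1)) with hA
  have hpow : ∀ (k : ℕ) (t : ℝ),
      HasDerivAt (fun t : ℝ => (t : ℂ) ^ k) (k * (t : ℂ) ^ (k - 1)) t := fun k t =>
    (hasDerivAt_pow k (t : ℂ)).comp_ofReal
  have dF : ∀ t : ℝ, 0 < t → HasDerivAt F (-(κ : ℂ) ^ 2 * (t : ℂ) ^ (n + 1) * V t) t := by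
    intro t ht
    have ht' : (t : ℂ) ≠ 0 := by exact_mod_cast ht.ne'
    refine (((hpow (n + 1) t).mul (hV1 t ht)).sub
      (((hpow n t).const_mul ((n : ℂ) + 1)).mul (hV t ht))).congr_deriv ?_
    cases n with
    | zero => simp; ring
    | succ k =>
      push_cast
      field_simp
      ring
  have dy : ∀ t : ℝ, 0 < t → HasDerivAt y (F t / (t : ℂ) ^ (2 * n + 2)) t := by
    intro t ht
    have ht' : (t : ℂ) ≠ 0 := by exact_mod_cast ht.ne'
    refine ((hV t ht).div (hpow (n + 1) t) (pow_ne_zero _ ht')).congr_deriv ?_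
    simp only [hF, Nat.add_sub_cancel]
    push_cast
    have : (t : ℂ) ^ (2 * n + 2) = ((t : ℂ) ^ (n + 1)) ^ 2 := by ring
    rw [this]
    ring
  have dy0 : ∀ t : ℝ, 0 < t →
      HasDerivAt y0 (c * (ρ : ℂ) ^ (n + 1) / (t : ℂ) ^ (2 * n + 2)) t := by
    intro t ht
    have ht' : (t : ℂ) ≠ 0 := by exact_mod_cast ht.ne'
    have hn : (2 * (n : ℂ) + 1) ≠ 0 := by exact_mod_cast (by omega : 2 * n + 1 ≠ 0)
    refine ((((hpow (2 * n + 1) t).fun_inv (pow_ne_zero _ ht')).const_sub _).const_mul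
      _).congr_deriv ?_
    simp only [Nat.add_sub_cancel]
    push_cast
    field_simp
    ring
  have hFρ : F ρ = c * (ρ : ℂ) ^ (n + 1) := by simp [hF, h0, h1]; ring
  -- `M` is the maximum of `‖y‖`; the error is first bounded in terms of `M`, then `M` by `A`.
  obtain ⟨t0, ht0, hmax⟩ := isCompact_Icc.exists_isMaxOn (Set.nonempty_Icc.2 hR.le)
    (f := fun t => ‖y t‖)
    (fun t ht => (dy t (lt_of_lt_of_le hρ ht.1)).continuousAt.norm.continuousWithinAt)
  set M : ℝ := ‖y t0‖ with hM
  have hM0 : 0 ≤ M := norm_nonneg _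
  have hyM : ∀ t ∈ Set.Icc ρ R, ‖y t‖ ≤ M := fun t ht => hmax ht
  have bF : ∀ t ∈ Set.Icc ρ R, ‖F t - F ρ‖ ≤ κ ^ 2 * M / (2 * n + 3) * t ^ (2 * n + 3) := by
    refine norm_le_of_deriv_bound (fun t => F t - F ρ) _ _
      (fun t => κ ^ 2 * M * t ^ (2 * n + 2)) ρ R hρ
      (fun t ht => (dF t ht).sub_const _) ?_ (by simp) (by positivity) ?_
    · intro t
      refine ((hasDerivAt_pow (2 * n + 3) t).const_mul _).congr_deriv ?_
      have : (2 * (n : ℝ) + 3) ≠ 0 := by positivity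
      push_cast
      field_simp
    · intro t ht
      have htp : 0 < t := lt_of_lt_of_le hρ ht.1
      have ht' : (t : ℂ) ≠ 0 := by exact_mod_cast htp.ne'
      have e : -(κ : ℂ) ^ 2 * (t : ℂ) ^ (n + 1) * V t
          = -((κ : ℂ) ^ 2 * (t : ℂ) ^ (2 * n + 2) * y t) := by
        simp only [hy]
        field_simp
        ring
      rw [e, norm_neg, norm_mul, norm_mul, norm_pow, norm_pow, Complex.norm_real,
        Complex.norm_real, Real.norm_eq_abs, Real.norm_eq_abs, sq_abs, abs_of_pos htp]
      have := mul_le_mul_of_nonneg_left (hyM t ht)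
        (by positivity : 0 ≤ κ ^ 2 * t ^ (2 * n + 2))
      linarith
  have bound_y : ∀ t ∈ Set.Icc ρ R, ‖y t - y0 t‖ ≤ κ ^ 2 * M / (2 * (2 * n + 3)) * t ^ 2 := by
    refine norm_le_of_deriv_bound (fun t => y t - y0 t) _ _
      (fun t => κ ^ 2 * M / (2 * n + 3) * t) ρ R hρ
      (fun t ht => (dy t ht).sub (dy0 t ht)) ?_ (by simp [hy, hy0, h0]) (by positivity) ?_
    · intro t
      refine ((hasDerivAt_pow 2 t).const_mul _).congr_deriv ?_
      have : (2 * (n : ℝ) + 3) ≠ 0 := by positivity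
      push_cast
      field_simp
    · intro t ht
      have htp : 0 < t := lt_of_lt_of_le hρ ht.1
      rw [← hFρ, ← sub_div, norm_div, norm_pow, Complex.norm_real, Real.norm_eq_abs,
        abs_of_pos htp, div_le_iff₀ (by positivity)]
      refine (bF t ht).trans (le_of_eq ?_)
      ring
  have bδ : ∀ t ∈ Set.Icc ρ R, ‖y t - y0 t‖ ≤ δ * M := by
    intro t ht
    refine (bound_y t ht).trans ?_
    have htp : 0 < t := lt_of_lt_of_le hρ ht.1
    have : t ^ 2 ≤ R ^ 2 := by gcongr; exact ht.2
    calc κ ^ 2 * M / (2 * (2 * n + 3)) * t ^ 2 ≤ κ ^ 2 * M / (2 * (2 * n + 3)) * R ^ 2 := by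
          gcongr
      _ = δ * M := by rw [hδ]; ring
  have by0 : ∀ t ∈ Set.Icc ρ R, ‖y0 t‖ ≤ A := by
    intro t ht
    have htp : 0 < t := lt_of_lt_of_le hρ ht.1
    have e : y0 t = c * (((ρ ^ (n + 1) / (2 * n + 1) *
        ((ρ ^ (2 * n + 1))⁻¹ - (t ^ (2 * n + 1))⁻¹) : ℝ)) : ℂ) := by
      simp only [hy0]
      push_cast
      ring
    have hle : (t ^ (2 * n + 1))⁻¹ ≤ (ρ ^ (2 * n + 1))⁻¹ := by
      gcongr; exact ht.1
    have hpos : 0 ≤ (t ^ (2 * n + 1))⁻¹ := by positivity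
    rw [e, norm_mul, Complex.norm_real, Real.norm_eq_abs, abs_of_nonneg
      (mul_nonneg (by positivity) (by linarith)), hA]
    calc ‖c‖ * (ρ ^ (n + 1) / (2 * n + 1) * ((ρ ^ (2 * n + 1))⁻¹ - (t ^ (2 * n + 1))⁻¹))
        ≤ ‖c‖ * (ρ ^ (n + 1) / (2 * n + 1) * (ρ ^ (2 * n + 1))⁻¹) := by
          gcongr; linarith
      _ = ‖c‖ / (ρ ^ n * (2 * n + 1)) := by
          field_simp
          ring
  have hMA : M ≤ A + δ * M := by
    calc M = ‖y0 t0 + (y t0 - y0 t0)‖ := by rw [hM]; congr 1; ring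
      _ ≤ ‖y0 t0‖ + ‖y t0 - y0 t0‖ := norm_add_le _ _
      _ ≤ A + δ * M := add_le_add (by0 t0 ht0) (bδ t0 ht0)
  have hM2 : M ≤ 2 * A := by nlinarith
  intro t ht
  refine (bδ t ht).trans ?_
  nlinarith

/-- Pointwise form of the perturbation estimate: `t V(t)` is close to its leading part
`c t^(n+2) / ((2n+1) ρ^n)`. -/
lemma pointwise_bound (n : ℕ) (hn : 1 ≤ n) (ρ R : ℝ) (c : ℂ) (V : ℝ → ℂ) (hρ : 0 < ρ)
    (δ : ℝ) (t : ℝ) (ht : t ∈ Set.Icc ρ R)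
    (h : ‖V t / (t : ℂ) ^ (n + 1) -
        c * (ρ : ℂ) ^ (n + 1) / (2 * n + 1) *
          (((ρ : ℂ) ^ (2 * n + 1))⁻¹ - ((t : ℂ) ^ (2 * n + 1))⁻¹)‖
        ≤ 2 * δ * (‖c‖ / (ρ ^ n * (2 * n + 1)))) :
    ‖(t : ℂ) * V t - c / ((ρ : ℂ) ^ n * (2 * n + 1)) * (t : ℂ) ^ (n + 2)‖
      ≤ ‖c‖ / (ρ ^ n * (2 * n + 1)) * (2 * δ * t ^ (n + 2) + ρ ^ (n + 2)) := by
  have htp : 0 < t := lt_of_lt_of_le hρ ht.1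
  have ht' : (t : ℂ) ≠ 0 := by exact_mod_cast htp.ne'
  have hρ' : (ρ : ℂ) ≠ 0 := by exact_mod_cast hρ.ne'
  have hn' : (2 * (n : ℂ) + 1) ≠ 0 := by exact_mod_cast (by omega : 2 * n + 1 ≠ 0)
  set D : ℂ := V t / (t : ℂ) ^ (n + 1) -
        c * (ρ : ℂ) ^ (n + 1) / (2 * n + 1) *
          (((ρ : ℂ) ^ (2 * n + 1))⁻¹ - ((t : ℂ) ^ (2 * n + 1))⁻¹) with hD
  have e : (t : ℂ) * V t - c / ((ρ : ℂ) ^ n * (2 * n + 1)) * (t : ℂ) ^ (n + 2)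
      = (t : ℂ) ^ (n + 2) * D -
        c / ((ρ : ℂ) ^ n * (2 * n + 1)) * ((ρ ^ (2 * n + 1) * (t ^ (n + 2) / t ^ (2 * n + 1)) : ℝ) : ℂ) := by
    rw [hD]
    push_cast
    field_simp
    ring
  have hq : ρ ^ (2 * n + 1) * (t ^ (n + 2) / t ^ (2 * n + 1)) ≤ ρ ^ (n + 2) := by
    obtain ⟨k, rfl⟩ : ∃ k, n = k + 1 := ⟨n - 1, by omega⟩
    have : ρ ^ k ≤ t ^ k := by gcongr; exact ht.1
    rw [← mul_div_assoc, div_le_iff₀ (by positivity)]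
    calc ρ ^ (2 * (k + 1) + 1) * t ^ (k + 1 + 2) = ρ ^ (k + 1 + 2) * (ρ ^ k * t ^ (k + 1 + 2)) := by
          ring
      _ ≤ ρ ^ (k + 1 + 2) * (t ^ k * t ^ (k + 1 + 2)) := by gcongr
      _ = _ := by ring
  have hK : ‖c / ((ρ : ℂ) ^ n * (2 * n + 1))‖ = ‖c‖ / (ρ ^ n * (2 * n + 1)) := by
    have : ((ρ : ℂ) ^ n * (2 * n + 1)) = ((ρ ^ n * (2 * n + 1) : ℝ) : ℂ) := by push_cast; rfl
    rw [norm_div, this, Complex.norm_real, Real.norm_eq_abs, abs_of_nonneg (by positivity)]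
  rw [e]
  refine (norm_sub_le _ _).trans ?_
  rw [norm_mul, norm_mul, hK, norm_pow, Complex.norm_real, Complex.norm_real, Real.norm_eq_abs,
    Real.norm_eq_abs, abs_of_pos htp, abs_of_nonneg (a := _ * _) (by positivity)]
  calc t ^ (n + 2) * ‖D‖ + ‖c‖ / (ρ ^ n * (2 * n + 1)) * (ρ ^ (2 * n + 1) * (t ^ (n + 2) / t ^ (2 * n + 1)))
      ≤ t ^ (n + 2) * (2 * δ * (‖c‖ / (ρ ^ n * (2 * n + 1))))
        + ‖c‖ / (ρ ^ n * (2 * n + 1)) * ρ ^ (n + 2) := by gcongr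
    _ = _ := by ring

/-! ### The integral and its asymptotics -/

lemma integral_bound (n : ℕ) (ρ R : ℝ) (K : ℂ) (V : ℝ → ℂ) (hρ : 0 < ρ) (hR : ρ < R)
    (δ : ℝ) (hδ : 0 ≤ δ) (hc : ContinuousOn V (Set.Icc ρ R))
    (h : ∀ t ∈ Set.Icc ρ R, ‖(t : ℂ) * V t - K * (t : ℂ) ^ (n + 2)‖
      ≤ ‖K‖ * (2 * δ * t ^ (n + 2) + ρ ^ (n + 2))) :
    ‖(∫ t in ρ..R, (t : ℂ) * V t) - K * (R : ℂ) ^ (n + 3) / (n + 3)‖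
      ≤ ‖K‖ * (2 * δ * (R ^ (n + 3) / (n + 3)) + ρ ^ (n + 2) * R) := by
  have i1 : IntervalIntegrable (fun t : ℝ => (t : ℂ) * V t) MeasureTheory.volume ρ R := by
    apply ContinuousOn.intervalIntegrable
    rw [Set.uIcc_of_le hR.le]
    exact Complex.continuous_ofReal.continuousOn.mul hc
  have i2 : IntervalIntegrable (fun t : ℝ => K * (t : ℂ) ^ (n + 2)) MeasureTheory.volume ρ R := by
    apply Continuous.intervalIntegrable
    fun_prop
  have v2 : ∫ t in ρ..R, K * (t : ℂ) ^ (n + 2)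
      = K * (((R ^ (n + 3) - ρ ^ (n + 3)) / (n + 3) : ℝ) : ℂ) := by
    rw [intervalIntegral.integral_const_mul]
    congr 1
    have : ∀ t : ℝ, (t : ℂ) ^ (n + 2) = ((t ^ (n + 2) : ℝ) : ℂ) := by intro t; push_cast; rfl
    simp_rw [this]
    rw [intervalIntegral.integral_ofReal, integral_pow]
    push_cast
    ring
  have b1 := intervalIntegral.norm_integral_le_of_norm_le (μ := MeasureTheory.volume) hR.le
    (f := fun t : ℝ => (t : ℂ) * V t - K * (t : ℂ) ^ (n + 2))
    (g := fun t : ℝ => ‖K‖ * (2 * δ * t ^ (n + 2) + ρ ^ (n + 2)))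
    (Filter.Eventually.of_forall fun t ht => h t ⟨ht.1.le, ht.2⟩)
    (by apply Continuous.intervalIntegrable; fun_prop)
  rw [intervalIntegral.integral_sub i1 i2, v2, intervalIntegral.integral_const_mul,
    intervalIntegral.integral_add (by apply Continuous.intervalIntegrable; fun_prop)
      (by apply Continuous.intervalIntegrable; fun_prop),
    intervalIntegral.integral_const_mul, integral_pow, intervalIntegral.integral_const] at b1
  have e : (∫ t in ρ..R, (t : ℂ) * V t) - K * (R : ℂ) ^ (n + 3) / (n + 3)
      = ((∫ t in ρ..R, (t : ℂ) * V t) - K * (((R ^ (n + 3) - ρ ^ (n + 3)) / (n + 3) : ℝ) : ℂ))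
        - K * ((ρ ^ (n + 3) / (n + 3) : ℝ) : ℂ) := by
    push_cast
    ring
  rw [e]
  refine (norm_sub_le _ _).trans ?_
  rw [norm_mul, Complex.norm_real, Real.norm_eq_abs, abs_of_nonneg (by positivity)]
  refine (add_le_add b1 le_rfl).trans ?_
  rw [← mul_add]
  refine mul_le_mul_of_nonneg_left ?_ (norm_nonneg _)
  have h3 : ρ ^ (n + 3) / (n + 3) ≤ ρ ^ (n + 2) * ρ := by
    rw [← pow_succ]
    exact div_le_self (by positivity) (by linarith [(Nat.cast_nonneg n : (0 : ℝ) ≤ n)])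
  have h4 : (R ^ (n + 2 + 1) - ρ ^ (n + 2 + 1)) / (((n + 2 : ℕ) : ℝ) + 1) ≤ R ^ (n + 3) / (n + 3) := by
    have : (((n + 2 : ℕ) : ℝ) + 1) = n + 3 := by push_cast; ring
    rw [this]
    gcongr
    linarith [pow_pos hρ (n + 2 + 1)]
  have h5 := mul_le_mul_of_nonneg_left h4 (by positivity : 0 ≤ 2 * δ)
  simp only [smul_eq_mul]
  nlinarith

lemma ratio_bound (κ ρ R : ℝ) (hκ : 0 < κ) (hρ : 0 < ρ) (hR : ρ < R) (n : ℕ) (hn : 1 ≤ n)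
    (δ : ℝ) (hδ : δ = κ ^ 2 * R ^ 2 / (2 * (2 * n + 3))) (hδ2 : δ ≤ 1 / 2) :
    ‖(∫ t in ρ..R, (t : ℂ) ^ 2 * Wfun κ n ρ t) /
          ((-2 * Complex.I * (R : ℂ) ^ 2 /
              ((2 * (n : ℂ) + 1) * ((n : ℂ) + 3) * (κ : ℂ))) *
            ((R / ρ : ℝ) : ℂ) ^ (n + 1)) - 1‖
      ≤ 2 * δ + (n + 3) * (ρ / R) ^ (n + 2) := by
  have hRp : 0 < R := hρ.trans hR
  have hδ0 : 0 ≤ δ := by rw [hδ]; positivity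
  set K : ℂ := (-2 * Complex.I * κ) / ((ρ : ℂ) ^ n * (2 * n + 1)) with hKdef
  have hκ' : (κ : ℂ) ≠ 0 := by exact_mod_cast hκ.ne'
  have hρ' : (ρ : ℂ) ≠ 0 := by exact_mod_cast hρ.ne'
  have hR' : (R : ℂ) ≠ 0 := by exact_mod_cast hRp.ne'
  have hn' : (2 * (n : ℂ) + 1) ≠ 0 := by exact_mod_cast (by omega : 2 * n + 1 ≠ 0)
  have hn3 : ((n : ℂ) + 3) ≠ 0 := by exact_mod_cast (by omega : n + 3 ≠ 0)
  have hK0 : K ≠ 0 := by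
    rw [hKdef]
    exact div_ne_zero (by simp [hκ']) (mul_ne_zero (pow_ne_zero _ hρ') hn')
  have hKn : ‖K‖ = ‖-2 * Complex.I * (κ : ℂ)‖ / (ρ ^ n * (2 * n + 1)) := by
    have : ((ρ : ℂ) ^ n * (2 * n + 1)) = ((ρ ^ n * (2 * n + 1) : ℝ) : ℂ) := by push_cast; rfl
    rw [hKdef, norm_div, this, Complex.norm_real, Real.norm_eq_abs, abs_of_nonneg (by positivity)]
  have hpert := perturbation n κ ρ R (-2 * Complex.I * κ) (rayV κ ρ n) (rayV1 κ ρ n) hρ hR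
    (fun t ht => hasDerivAt_rayV κ ρ n t hκ ht) (fun t ht => hasDerivAt_rayV1 κ ρ n t hκ ht)
    (rayV_self κ ρ n) (rayV1_self κ ρ n hκ hρ) δ hδ hδ2
  have hint := integral_bound n ρ R K (rayV κ ρ n) hρ hR δ hδ0
    (fun t ht => (hasDerivAt_rayV κ ρ n t hκ
      (lt_of_lt_of_le hρ ht.1)).continuousAt.continuousWithinAt)
    (by
      intro t ht
      rw [hKn]
      exact pointwise_bound n hn ρ R _ _ hρ δ t ht (hpert t ht))
  have hW : (∫ t in ρ..R, (t : ℂ) ^ 2 * Wfun κ n ρ t)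
      = (∫ t in ρ..R, (t : ℂ) * rayV κ ρ n t) / ((κ : ℂ) ^ 2 * ρ) := by
    rw [← intervalIntegral.integral_div]
    refine intervalIntegral.integral_congr fun t ht => ?_
    rw [Set.uIcc_of_le hR.le] at ht
    exact Wfun_eq κ ρ n t hκ hρ (lt_of_lt_of_le hρ ht.1)
  have hden : ((-2 * Complex.I * (R : ℂ) ^ 2 /
              ((2 * (n : ℂ) + 1) * ((n : ℂ) + 3) * (κ : ℂ))) *
            ((R / ρ : ℝ) : ℂ) ^ (n + 1)) = (K * (R : ℂ) ^ (n + 3) / (n + 3)) / ((κ : ℂ) ^ 2 * ρ) := by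
    rw [hKdef]
    push_cast
    rw [div_pow]
    field_simp
    ring
  have hL : K * (R : ℂ) ^ (n + 3) / (n + 3) ≠ 0 :=
    div_ne_zero (mul_ne_zero hK0 (pow_ne_zero _ hR')) hn3
  rw [hW, hden, div_div_div_cancel_right₀ (mul_ne_zero (pow_ne_zero _ hκ') hρ'),
    div_sub_one hL, norm_div]
  have hLn : ‖K * (R : ℂ) ^ (n + 3) / (n + 3)‖ = ‖K‖ * (R ^ (n + 3) / (n + 3)) := by
    have : K * (R : ℂ) ^ (n + 3) / (n + 3) = K * ((R ^ (n + 3) / (n + 3) : ℝ) : ℂ) := by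
      push_cast
      ring
    rw [this, norm_mul, Complex.norm_real, Real.norm_eq_abs, abs_of_nonneg (by positivity)]
  rw [hLn, div_le_iff₀ (by have := norm_pos_iff.2 hK0; positivity)]
  refine hint.trans (le_of_eq ?_)
  rw [div_pow]
  field_simp
  ring

/-- for `κ > 0` and `0 < R' < R`,
`∫_{R'}^{R} t²·W_n(R', t) dt ∼ −(2iR²/((2n+1)(n+3)κ))·(R/R')^{n+1}` as `n → ∞`,
in the sense that the quotient tends to `1`. -/
theorem stmt16 (κ R' R : ℝ) (hκ : 0 < κ) (hR' : 0 < R') (hRR : R' < R) :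
    Filter.Tendsto
      (fun n : ℕ =>
        (∫ t in R'..R, (t : ℂ) ^ 2 * Wfun κ n R' t) /
          ((-2 * Complex.I * (R : ℂ) ^ 2 /
              ((2 * (n : ℂ) + 1) * ((n : ℂ) + 3) * (κ : ℂ))) *
            ((R / R' : ℝ) : ℂ) ^ (n + 1)))
      Filter.atTop (nhds 1) := by
  have h2 : Filter.Tendsto (fun n : ℕ => κ ^ 2 * R ^ 2 / (2 * (2 * (n : ℝ) + 3)))
      Filter.atTop (nhds 0) := by
    refine Filter.Tendsto.const_div_atTop ?_ _
    refine Filter.Tendsto.const_mul_atTop (by norm_num) ?_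
    refine Filter.tendsto_atTop_add_const_right _ _ ?_
    exact Filter.Tendsto.const_mul_atTop (by norm_num) tendsto_natCast_atTop_atTop
  have hR : 0 < R := hR'.trans hRR
  have hr0 : 0 ≤ R' / R := by positivity
  have hr1 : R' / R < 1 := (div_lt_one hR).2 hRR
  have h3 : Filter.Tendsto (fun n : ℕ => ((n : ℝ) + 3) * (R' / R) ^ (n + 2))
      Filter.atTop (nhds 0) := by
    have a := tendsto_self_mul_const_pow_of_lt_one hr0 hr1
    have b := tendsto_pow_atTop_nhds_zero_of_lt_one hr0 hr1
    have := (a.add (b.const_mul 3)).mul_const ((R' / R) ^ 2)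
    simp only [mul_zero, add_zero, zero_mul] at this
    refine this.congr fun n => ?_
    ring
  have h4 := (h2.const_mul 2).add h3
  simp only [mul_zero, add_zero] at h4
  rw [tendsto_iff_norm_sub_tendsto_zero]
  refine squeeze_zero' (Filter.Eventually.of_forall fun _ => norm_nonneg _) ?_ h4
  filter_upwards [Filter.eventually_ge_atTop 1,
    h2.eventually (ge_mem_nhds (by norm_num : (0 : ℝ) < 1 / 2))] with n hn hδ
  exact ratio_bound κ R' R hκ hR' hRR n hn _ rfl hδ
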